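/- (VC-theorem for thickets) Let (X, μ) be a finite probability space, F a family of subsets of X, and ρ_F the thicket shatter function of F. Then for any integer n ≥ 1 and any ε > 0, the μ^{2^n−1}-probability of the set of tuples x̄ = (x_σ)_{σ ∈ 2^{<n}} ∈ X^{2^n−1} such that sup_{S ∈ F} |test(x̄, S) − μ(S)| > ε is at most 8 · ρ_F(n) · exp(−nε²/32). -/

import Mathlib

open MeasureTheory

/- The characteristic path of `S` through a test tree `x = (x_σ)_{σ ∈ 2^{<n}}` (a node
`σ` of length `i < n` is encoded as the pair `⟨i, σ⟩` in `Σ i : Fin n, (Fin i → Bool)`). -/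
open Classical in
noncomputable def charPath {X : Type*} (S : Set X) {n : ℕ}
    (x : (Σ i : Fin n, (Fin i.1 → Bool)) → X) (m : ℕ) (hm : m < n) : Bool :=
  if x ⟨⟨m, hm⟩, fun j : Fin m => charPath S x j.1 (j.2.trans hm)⟩ ∈ S then true else false
termination_by m

/-- `test(x̄, S)`: the fraction of the `n` elements along the characteristic path of `S`
through the test tree `x̄` that lie in `S`. -/
noncomputable def ttest {X : Type*} (S : Set X) {n : ℕ}
    (x : (Σ i : Fin n, (Fin i.1 → Bool)) → X) : ℝ :=
  (Finset.univ.filter (fun m : Fin n => charPath S x m.1 m.2 = true)).card / n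

/-- A leaf `τ ∈ 2^n` of a binary element tree `T` is properly labeled by `A ⊆ X` if for all
`m < n`, `T(τ|_{[m]}) ∈ A` iff `τ(m) = 1`. -/
def ProperlyLabeled {X : Type*} (T : List Bool → X) {n : ℕ} (τ : Fin n → Bool)
    (A : Set X) : Prop :=
  ∀ m : Fin n, (T ((List.ofFn τ).take m.1) ∈ A ↔ τ m = true)

/-- The thicket shatter function `ρ_F(n)`: the maximum, over binary element trees of
height `n` with labels from `X`, of the number of leaves properly labeled by some
member of `F`. -/
noncomputable def thicketShatter {X : Type*} (F : Set (Set X)) (n : ℕ) : ℕ :=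
  sSup {m : ℕ | ∃ T : List Bool → X,
    m = {τ : Fin n → Bool | ∃ A ∈ F, ProperlyLabeled T τ A}.ncard}


namespace ThicketVC

/-- the part of `G` that answers `α` at `a` -/
def cut {X : Type*} (G : Set (Set X)) (a : X) (α : Bool) : Set (Set X) :=
  {S | S ∈ G ∧ (a ∈ S ↔ α = true)}

theorem cut_comm {X : Type*} (G : Set (Set X)) (a b : X) (α β : Bool) :
    cut (cut G a α) b β = cut (cut G b β) a α := by
  ext S; simp only [cut, Set.mem_ofPred_eq]; tauto

open Classical in
/-- recursive form of the shatter function -/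
noncomputable def rr {X : Type*} [Fintype X] : ℕ → Set (Set X) → ℕ
  | 0, G => if G.Nonempty then 1 else 0
  | n + 1, G => Finset.univ.sup (fun a : X => rr n (cut G a true) + rr n (cut G a false))

theorem rr_step {X : Type*} [Fintype X] (n : ℕ) (G : Set (Set X)) (a : X) :
    rr n (cut G a true) + rr n (cut G a false) ≤ rr (n + 1) G := by
  rw [rr]
  exact Finset.le_sup (f := fun a : X => rr n (cut G a true) + rr n (cut G a false))
    (Finset.mem_univ a)

theorem cut_mono {X : Type*} {G H : Set (Set X)} (h : G ⊆ H) (a : X) (α : Bool) :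
    cut G a α ⊆ cut H a α := fun _ hS => ⟨h hS.1, hS.2⟩

theorem rr_mono {X : Type*} [Fintype X] (n : ℕ) : ∀ {G H : Set (Set X)}, G ⊆ H →
    rr n G ≤ rr n H := by
  induction n with
  | zero =>
    intro G H h
    simp only [rr]
    split_ifs with h1 h2 <;> simp
    exact h2 (h1.mono h)
  | succ n ih =>
    intro G H h
    rw [rr, rr]
    apply Finset.sup_mono_fun
    intro a _
    exact add_le_add (ih (cut_mono h a _)) (ih (cut_mono h a _))

theorem rr_add {X : Type*} [Fintype X] (F : Set (Set X)) (m n : ℕ) :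
    ∀ G : Set (Set X), G ⊆ F → rr (n + m) G ≤ rr n G * rr m F := by
  induction n with
  | zero =>
    intro G h
    by_cases hG : G.Nonempty
    · simp only [rr, hG, if_true, one_mul, zero_add]
      exact rr_mono m h
    · have hE : G = ∅ := Set.not_nonempty_iff_eq_empty.mp hG
      have : ∀ k, rr k (∅ : Set (Set X)) = 0 := by
        intro k
        induction k with
        | zero => simp [rr]
        | succ k ih =>
          have hc : ∀ (a : X) α, cut (∅ : Set (Set X)) a α = ∅ := by
            intro a α; ext S; simp [cut]
          simp [rr, hc, ih]
      simp [hE, this]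
  | succ n ih =>
    intro G h
    have e : n + 1 + m = (n + m) + 1 := by ring
    rw [e, rr]
    apply Finset.sup_le
    intro a _
    have h1 := ih (cut G a true) (fun S hS => h hS.1)
    have h2 := ih (cut G a false) (fun S hS => h hS.1)
    have h3 := Nat.mul_le_mul_right (rr m F) (rr_step n G a)
    rw [add_mul] at h3
    omega

/-- gluing two trees below a root -/
def glue {X : Type*} (a : X) (T : Bool → List Bool → X) : List Bool → X
  | [] => a
  | b :: l => T b l

theorem glue_pl {X : Type*} (a : X) (T : Bool → List Bool → X) {n : ℕ} (b : Bool)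
    (τ : Fin n → Bool) (A : Set X) (ha : a ∈ A ↔ b = true) (h : ProperlyLabeled (T b) τ A) :
    ProperlyLabeled (glue a T) (Fin.cons b τ : Fin (n + 1) → Bool) A := by
  intro m
  refine Fin.cases ?_ (fun m => ?_) m
  · simpa [glue] using ha
  · have := h m
    simpa [List.ofFn_succ, glue] using this

theorem rr_le_tree {X : Type*} [Fintype X] [Nonempty X] (n : ℕ) : ∀ G : Set (Set X),
    ∃ T : List Bool → X,
      rr n G ≤ {τ : Fin n → Bool | ∃ A ∈ G, ProperlyLabeled T τ A}.ncard := by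
  induction n with
  | zero =>
    intro G
    refine ⟨fun _ => Classical.arbitrary X, ?_⟩
    simp only [rr]
    split_ifs with h
    · obtain ⟨A, hA⟩ := h
      rw [Nat.one_le_iff_ne_zero, Ne, Set.ncard_eq_zero (Set.toFinite _)]
      apply Set.Nonempty.ne_empty
      exact ⟨Fin.elim0, A, hA, fun m => m.elim0⟩
    · simp
  | succ n ih =>
    intro G
    obtain ⟨a, -, ha⟩ := Finset.exists_mem_eq_sup (Finset.univ : Finset X)
      Finset.univ_nonempty (fun a : X => rr n (cut G a true) + rr n (cut G a false))
    choose T hT using fun b => ih (cut G a b)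
    refine ⟨glue a T, ?_⟩
    rw [rr, ha]
    let E : Bool → Set (Fin n → Bool) := fun b =>
      {τ | ∃ A ∈ cut G a b, ProperlyLabeled (T b) τ A}
    have hinj : ∀ b : Bool, Function.Injective
        (fun τ : Fin n → Bool => (Fin.cons b τ : Fin (n + 1) → Bool)) :=
      fun b => Fin.cons_right_injective (α := fun _ => Bool) b
    have hdis : Disjoint ((fun τ : Fin n → Bool => (Fin.cons true τ : Fin (n + 1) → Bool)) '' E true)
        ((fun τ : Fin n → Bool => (Fin.cons false τ : Fin (n + 1) → Bool)) '' E false) := by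
      rw [Set.disjoint_left]
      rintro _ ⟨τ, _, rfl⟩ ⟨τ', _, h⟩
      have := congrFun h 0
      simp at this
    have h1 := hT true
    have h2 := hT false
    calc _ ≤ (E true).ncard + (E false).ncard := add_le_add h1 h2
      _ = (((fun τ : Fin n → Bool => (Fin.cons true τ : Fin (n + 1) → Bool)) '' E true) ∪
        ((fun τ : Fin n → Bool => (Fin.cons false τ : Fin (n + 1) → Bool)) '' E false)).ncard := by
          rw [Set.ncard_union_eq hdis (Set.toFinite _) (Set.toFinite _),
            Set.ncard_image_of_injective _ (hinj true), Set.ncard_image_of_injective _ (hinj false)]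
      _ ≤ _ := by
          apply Set.ncard_le_ncard _ (Set.toFinite _)
          rintro _ (⟨τ, ⟨A, hA, hp⟩, rfl⟩ | ⟨τ, ⟨A, hA, hp⟩, rfl⟩)
          · exact ⟨A, hA.1, glue_pl a T true τ A hA.2 hp⟩
          · exact ⟨A, hA.1, glue_pl a T false τ A hA.2 hp⟩

theorem rr_le_shatter {X : Type*} [Fintype X] [Nonempty X] (n : ℕ) (F : Set (Set X)) :
    rr n F ≤ thicketShatter F n := by
  obtain ⟨T, hT⟩ := rr_le_tree n F
  refine hT.trans ?_
  apply le_csSup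
  · refine ⟨Nat.card (Fin n → Bool), ?_⟩
    rintro _ ⟨T, rfl⟩
    exact Set.ncard_le_card _
  · exact ⟨T, rfl⟩

/-- index of nodes -/
abbrev Node (n : ℕ) := Σ i : Fin n, (Fin i.1 → Bool)

def root (n : ℕ) : Node (n + 1) := ⟨⟨0, Nat.succ_pos n⟩, fun j => j.elim0⟩

def child {n : ℕ} (b : Bool) (σ : Node n) : Node (n + 1) :=
  ⟨⟨σ.1.1 + 1, Nat.succ_lt_succ σ.1.2⟩, (Fin.cons b σ.2 : Fin (σ.1.1 + 1) → Bool)⟩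

theorem charPath_zero {X : Type*} (S : Set X) {n : ℕ} (x : Node (n + 1) → X) (h : 0 < n + 1) :
    charPath S x 0 h = true ↔ x (root n) ∈ S := by
  rw [charPath]
  have : (⟨⟨0, h⟩, fun j : Fin 0 => charPath S x j.1 (j.2.trans h)⟩ : Node (n+1)) = root n := by
    unfold root
    congr 1
    funext j; exact j.elim0
  rw [this]; simp

theorem charPath_succ {X : Type*} (S : Set X) {n : ℕ} (x : Node (n + 1) → X) (b : Bool)
    (hb : x (root n) ∈ S ↔ b = true) (m : ℕ) :
    ∀ (hm : m < n), charPath S x (m + 1) (Nat.succ_lt_succ hm) =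
      charPath S (fun σ => x (child b σ)) m hm := by
  induction m using Nat.strong_induction_on with
  | _ m ih =>
    intro hm
    rw [charPath, charPath]
    have : (⟨⟨m + 1, Nat.succ_lt_succ hm⟩,
        fun j : Fin (m + 1) => charPath S x j.1 (j.2.trans (Nat.succ_lt_succ hm))⟩ : Node (n+1)) =
        child b ⟨⟨m, hm⟩, fun j : Fin m => charPath S (fun σ => x (child b σ)) j.1 (j.2.trans hm)⟩ := by
      unfold child
      congr 1
      funext j
      refine Fin.cases ?_ (fun j => ?_) j
      · have h0 := charPath_zero S x (Nat.succ_pos n)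
        simp only [Fin.cons_zero, Fin.val_zero]
        rw [Bool.eq_iff_iff, h0, hb]
      · simp only [Fin.cons_succ, Fin.val_succ]
        exact ih j.1 j.2 _
    rw [this]

/-- number of hits -/
noncomputable def hits {X : Type*} (S : Set X) {n : ℕ} (x : Node n → X) : ℝ :=
  ∑ m : Fin n, if charPath S x m.1 m.2 = true then (1 : ℝ) else 0

theorem ttest_eq {X : Type*} (S : Set X) {n : ℕ} (x : Node n → X) :
    ttest S x = hits S x / n := by
  unfold ttest hits
  rw [Finset.sum_boole]

def bv (b : Bool) : ℝ := if b = true then 1 else 0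

theorem hits_succ {X : Type*} (S : Set X) {n : ℕ} (x : Node (n + 1) → X) (b : Bool)
    (hb : x (root n) ∈ S ↔ b = true) :
    hits S x = bv b + hits S (fun σ => x (child b σ)) := by
  unfold hits bv
  rw [Fin.sum_univ_succ]
  congr 1
  · have h0 := charPath_zero S x (Nat.succ_pos n)
    simp only [Fin.val_zero]
    simp only [h0, hb]
  · apply Finset.sum_congr rfl
    intro m _
    have := charPath_succ S x b hb m.1 m.2
    simp only [Fin.val_succ, this]

/-- assembling a tree -/
def asm {X : Type*} {n : ℕ} (z : X × ((Node n → X) × (Node n → X))) : Node (n + 1) → X :=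
  fun σ => match σ with
  | ⟨⟨0, _⟩, _⟩ => z.1
  | ⟨⟨i + 1, h⟩, τ⟩ => if τ 0 = true then z.2.1 ⟨⟨i, Nat.lt_of_succ_lt_succ h⟩, Fin.tail τ⟩
      else z.2.2 ⟨⟨i, Nat.lt_of_succ_lt_succ h⟩, Fin.tail τ⟩

theorem asm_root {X : Type*} {n : ℕ} (z : X × ((Node n → X) × (Node n → X))) :
    asm z (root n) = z.1 := rfl

theorem asm_child {X : Type*} {n : ℕ} (z : X × ((Node n → X) × (Node n → X))) (b : Bool)
    (σ : Node n) : asm z (child b σ) = if b = true then z.2.1 σ else z.2.2 σ := by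
  obtain ⟨⟨i, h⟩, τ⟩ := σ
  simp [asm, child]

theorem node_cases {n : ℕ} (P : Node (n + 1) → Prop) (h0 : P (root n))
    (h1 : ∀ b σ, P (child b σ)) : ∀ σ, P σ := by
  rintro ⟨⟨i, hi⟩, τ⟩
  cases i with
  | zero =>
    have : (⟨⟨0, hi⟩, τ⟩ : Node (n + 1)) = root n := by
      unfold root; congr 1; funext j; exact j.elim0
    rw [this]; exact h0
  | succ i =>
    have := h1 (τ 0) ⟨⟨i, Nat.lt_of_succ_lt_succ hi⟩, Fin.tail τ⟩
    have e : child (τ 0) (⟨⟨i, Nat.lt_of_succ_lt_succ hi⟩, Fin.tail τ⟩ : Node n) =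
        ⟨⟨i + 1, hi⟩, τ⟩ := by
      unfold child; congr 1; exact Fin.cons_self_tail τ
    rwa [e] at this

theorem child_inj {n : ℕ} (b : Bool) : Function.Injective (child (n := n) b) := by
  intro σ σ' h
  have h2 : ∀ σ : Node n, asm (X := Option (Node n)) (none, (some, some)) (child b σ) = some σ := by
    intro σ; rw [asm_child]; simp
  have := congrArg (asm (X := Option (Node n)) (none, (some, some))) h
  rw [h2, h2] at this
  exact Option.some.inj this

theorem prod_node {M : Type*} [CommMonoid M] {n : ℕ} (f : Node (n + 1) → M) :
    ∏ σ, f σ = f (root n) * ((∏ σ, f (child true σ)) * ∏ σ, f (child false σ)) := by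
  let g : Option (Bool × Node n) → Node (n + 1) := fun o => match o with
    | none => root n
    | some (b, σ) => child b σ
  have hg : Function.Bijective g := by
    constructor
    · have hne : ∀ b (σ : Node n), root n ≠ child b σ := by
        intro b σ h
        have := congrArg (fun s => s.1.1) h
        simp [root, child] at this
      rintro (_ | ⟨b, σ⟩) (_ | ⟨b', σ'⟩) h
      · rfl
      · exact (hne _ _ h).elim
      · exact (hne _ _ h.symm).elim
      · have hb : b = b' := by
          have := congrArg (asm (X := Option Bool) (none, ((fun _ => some true), (fun _ => some false)))) h
          simp only [g, asm_child] at this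
          revert this
          cases b <;> cases b' <;> simp
        subst hb
        have := child_inj b h
        rw [this]
    · intro σ
      refine node_cases (fun σ => ∃ a, g a = σ) ⟨none, rfl⟩ (fun b σ => ⟨some (b, σ), rfl⟩) σ
  rw [← Equiv.prod_comp (Equiv.ofBijective g hg) f, Fintype.prod_option, Fintype.prod_prod_type,
    Fintype.prod_bool]
  rfl

section meas
variable {X : Type*} [Fintype X] [MeasurableSpace X] [MeasurableSingletonClass X]
  (μ : Measure X) [IsProbabilityMeasure μ]

noncomputable abbrev tm (n : ℕ) : Measure (Node n → X) := Measure.pi (fun _ : Node n => μ)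

theorem tm_succ (n : ℕ) :
    tm μ (n + 1) = (μ.prod ((tm μ n).prod (tm μ n))).map asm := by
  apply Measure.pi_eq
  intro s _
  rw [Measure.map_apply (Measurable.of_discrete) (MeasurableSet.of_discrete)]
  have : asm ⁻¹' (Set.univ.pi s) = s (root n) ×ˢ ((Set.univ.pi (fun σ => s (child true σ))) ×ˢ
      (Set.univ.pi (fun σ => s (child false σ)))) := by
    ext z
    simp only [Set.mem_preimage, Set.mem_pi, Set.mem_univ, true_imp_iff, Set.mem_prod]
    constructor
    · intro h
      refine ⟨h (root n), fun σ => ?_, fun σ => ?_⟩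
      · have := h (child true σ)
        rw [asm_child] at this; simpa using this
      · have := h (child false σ)
        rw [asm_child] at this; simpa using this
    · rintro ⟨h1, h2, h3⟩
      refine node_cases _ h1 ?_
      intro b σ
      rw [asm_child]
      cases b
      · simpa using h3 σ
      · simpa using h2 σ
  rw [this, Measure.prod_prod, Measure.prod_prod, Measure.pi_pi, Measure.pi_pi, prod_node]

theorem lintegral_sub (n : ℕ) (b : Bool) (Φ : X → (Node n → X) → ENNReal) :
    ∫⁻ x, Φ (x (root n)) (fun σ => x (child b σ)) ∂(tm μ (n + 1)) =
      ∫⁻ a, ∫⁻ y, Φ a y ∂(tm μ n) ∂μ := by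
  rw [tm_succ, lintegral_map Measurable.of_discrete Measurable.of_discrete,
    lintegral_prod _ Measurable.of_discrete.aemeasurable]
  apply lintegral_congr
  intro a
  rw [lintegral_prod _ Measurable.of_discrete.aemeasurable]
  cases b
  · simp [asm_root, asm_child]
  · simp [asm_root, asm_child]

noncomputable def E (t : ℝ) : ENNReal := ENNReal.ofReal (Real.exp t)

theorem E_add (s t : ℝ) : E (s + t) = E s * E t := by
  unfold E; rw [Real.exp_add, ENNReal.ofReal_mul (Real.exp_pos _).le]

noncomputable def phi (l : ℝ) (n : ℕ) (S : Set X) (x : Node n → X) : ENNReal :=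
  E (l * (hits S x - n * (μ S).toReal))

noncomputable def Q (l : ℝ) (n : ℕ) (G : Set (Set X)) : ENNReal :=
  ∫⁻ x, ⨆ S ∈ G, phi μ l n S x ∂(tm μ n)

open Classical in
theorem jensen (l : ℝ) (S : Set X) :
    E (-(l * (μ S).toReal)) ≤ ∫⁻ b, E (-(l * bv (decide (b ∈ S)))) ∂μ := by
  have h1 : ∀ b, E (-(l * bv (decide (b ∈ S)))) =
      S.indicator (fun _ => E (-l)) b + Sᶜ.indicator (fun _ => 1) b := by
    intro b
    by_cases hb : b ∈ S <;> simp [hb, bv, E]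
  simp_rw [h1]
  rw [lintegral_add_left Measurable.of_discrete, lintegral_indicator_const MeasurableSet.of_discrete,
    lintegral_indicator_const MeasurableSet.of_discrete]
  have hq : μ S = ENNReal.ofReal (μ S).toReal := (ENNReal.ofReal_toReal (measure_ne_top _ _)).symm
  have hq1 : (μ S).toReal ≤ 1 := by
    have := ENNReal.toReal_mono ENNReal.one_ne_top (prob_le_one (μ := μ) (s := S))
    simpa using this
  have hqc : μ Sᶜ = ENNReal.ofReal (1 - (μ S).toReal) := by
    rw [prob_compl_eq_one_sub MeasurableSet.of_discrete, ENNReal.ofReal_sub _ ENNReal.toReal_nonneg,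
      ← hq, ENNReal.ofReal_one]
  rw [hqc]
  nth_rewrite 2 [hq]
  have hq0 : 0 ≤ (μ S).toReal := ENNReal.toReal_nonneg
  clear hqc hq h1
  generalize (μ S).toReal = q at *
  unfold E
  rw [one_mul, ← ENNReal.ofReal_mul (Real.exp_pos _).le,
    ← ENNReal.ofReal_add (mul_nonneg (Real.exp_pos _).le hq0) (by linarith)]
  apply ENNReal.ofReal_le_ofReal
  have := convexOn_exp.2 (Set.mem_univ (-l)) (Set.mem_univ (0 : ℝ)) hq0
    (by linarith : 0 ≤ 1 - q) (by ring)
  simp only [smul_eq_mul, mul_zero, add_zero, Real.exp_zero, mul_one] at this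
  calc Real.exp (-(l * q)) = Real.exp (q * -l) := by congr 1; ring
    _ ≤ _ := this
    _ = _ := by ring

theorem E_sym (l : ℝ) (α β : Bool) :
    E (l * bv α) * E (-(l * bv β)) + E (l * bv β) * E (-(l * bv α)) ≤ 2 * E (l ^ 2 / 2) := by
  rw [← E_add, ← E_add]
  unfold E
  rw [← ENNReal.ofReal_add (Real.exp_pos _).le (Real.exp_pos _).le]
  have : (2 : ENNReal) = ENNReal.ofReal 2 := by simp
  rw [this, ← ENNReal.ofReal_mul (by norm_num)]
  apply ENNReal.ofReal_le_ofReal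
  have h1 := Real.cosh_le_exp_half_sq l
  rw [Real.cosh_eq] at h1
  have h2 : 1 ≤ Real.exp (l ^ 2 / 2) := Real.one_le_exp (by positivity)
  cases α <;> cases β <;> simp [bv] <;> linarith

theorem Q_step (l : ℝ) (n : ℕ) (G : Set (Set X)) :
    Q μ l (n + 1) G ≤ ∫⁻ a, ∫⁻ b, ∑ α : Bool, ∑ β : Bool,
      E (l * bv α) * E (-(l * bv β)) * Q μ l n (cut (cut G a α) b β) ∂μ ∂μ := by
  classical
  have key : ∀ x : Node (n + 1) → X, (⨆ S ∈ G, phi μ l (n + 1) S x) ≤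
      ∑ α : Bool, ∫⁻ b, ∑ β : Bool, E (l * bv α) * E (-(l * bv β)) *
        ⨆ S ∈ cut (cut G (x (root n)) α) b β, phi μ l n S (fun σ => x (child α σ)) ∂μ := by
    intro x
    refine iSup₂_le fun S hS => ?_
    set α : Bool := decide (x (root n) ∈ S) with hα
    have hα' : x (root n) ∈ S ↔ α = true := by simp [hα]
    refine le_trans ?_ (Finset.single_le_sum (fun _ _ => zero_le) (Finset.mem_univ α))
    have e : phi μ l (n + 1) S x = E (-(l * (μ S).toReal)) *
        (E (l * bv α) * phi μ l n S (fun σ => x (child α σ))) := by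
      unfold phi
      rw [hits_succ S x α hα', ← E_add, ← E_add]
      congr 1
      push_cast
      ring
    rw [e]
    refine le_trans (mul_le_mul_left (jensen μ l S) _) ?_
    rw [← lintegral_mul_const _ Measurable.of_discrete]
    apply lintegral_mono
    intro b
    refine le_trans ?_ (Finset.single_le_sum (fun _ _ => zero_le)
      (Finset.mem_univ (decide (b ∈ S))))
    have hm : S ∈ cut (cut G (x (root n)) α) b (decide (b ∈ S)) := ⟨⟨hS, hα'⟩, by simp⟩
    have := le_iSup₂ (f := fun S (_ : S ∈ cut (cut G (x (root n)) α) b (decide (b ∈ S))) =>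
      phi μ l n S (fun σ => x (child α σ))) S hm
    calc _ = E (l * bv α) * E (-(l * bv (decide (b ∈ S)))) *
          phi μ l n S (fun σ => x (child α σ)) := by ring
      _ ≤ _ := by
        gcongr
        exact le_iSup₂ (f := fun S' (_ : S' ∈ cut (cut G (x (root n)) α) b (decide (b ∈ S))) =>
          phi μ l n S' (fun σ => x (child α σ))) S hm
  have h1 : Q μ l (n + 1) G ≤ _ := lintegral_mono key
  refine h1.trans (le_of_eq ?_)
  rw [lintegral_finsetSum _ (fun _ _ => Measurable.of_discrete)]
  have h2 : ∀ α : Bool, ∫⁻ x : Node (n + 1) → X, (∫⁻ b, ∑ β : Bool,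
        E (l * bv α) * E (-(l * bv β)) * ⨆ S ∈ cut (cut G (x (root n)) α) b β,
          phi μ l n S (fun σ => x (child α σ)) ∂μ) ∂(tm μ (n + 1)) =
      ∫⁻ a, ∫⁻ b, ∑ β : Bool,
        E (l * bv α) * E (-(l * bv β)) * Q μ l n (cut (cut G a α) b β) ∂μ ∂μ := by
    intro α
    rw [lintegral_sub μ n α (fun a y => ∫⁻ b, ∑ β : Bool,
        E (l * bv α) * E (-(l * bv β)) * ⨆ S ∈ cut (cut G a α) b β, phi μ l n S y ∂μ)]
    refine lintegral_congr fun a => ?_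
    rw [lintegral_lintegral_swap Measurable.of_discrete.aemeasurable]
    refine lintegral_congr fun b => ?_
    rw [lintegral_finsetSum _ (fun _ _ => Measurable.of_discrete)]
    refine Finset.sum_congr rfl fun β _ => ?_
    rw [lintegral_const_mul _ Measurable.of_discrete]
    rfl
  rw [Finset.sum_congr rfl fun α _ => h2 α,
    ← lintegral_finsetSum _ (fun _ _ => Measurable.of_discrete)]
  refine lintegral_congr fun a => ?_
  rw [← lintegral_finsetSum _ (fun _ _ => Measurable.of_discrete)]

theorem Q_sym (l : ℝ) (q : Set (Set X) → ENNReal) (G : Set (Set X)) :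
    ∫⁻ a, ∫⁻ b, ∑ α : Bool, ∑ β : Bool,
      E (l * bv α) * E (-(l * bv β)) * q (cut (cut G a α) b β) ∂μ ∂μ ≤
    E (l ^ 2 / 2) * ∫⁻ a, ∫⁻ b, ∑ α : Bool, ∑ β : Bool, q (cut (cut G a α) b β) ∂μ ∂μ := by
  set J := ∫⁻ a, ∫⁻ b, ∑ α : Bool, ∑ β : Bool,
      E (l * bv α) * E (-(l * bv β)) * q (cut (cut G a α) b β) ∂μ ∂μ with hJ
  have hsw : J = ∫⁻ a, ∫⁻ b, ∑ α : Bool, ∑ β : Bool,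
      E (l * bv β) * E (-(l * bv α)) * q (cut (cut G a α) b β) ∂μ ∂μ := by
    rw [hJ, lintegral_lintegral_swap Measurable.of_discrete.aemeasurable]
    refine lintegral_congr fun a => lintegral_congr fun b => ?_
    rw [Finset.sum_comm]
    refine Finset.sum_congr rfl fun α _ => Finset.sum_congr rfl fun β _ => ?_
    rw [cut_comm]
  have h2 : 2 * J ≤ 2 * (E (l ^ 2 / 2) *
      ∫⁻ a, ∫⁻ b, ∑ α : Bool, ∑ β : Bool, q (cut (cut G a α) b β) ∂μ ∂μ) := by
    rw [two_mul]
    nth_rewrite 2 [hsw]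
    rw [hJ, ← lintegral_add_left Measurable.of_discrete, ← mul_assoc,
      ← lintegral_const_mul _ Measurable.of_discrete]
    refine lintegral_mono fun a => ?_
    dsimp only
    rw [← lintegral_add_left Measurable.of_discrete, ← lintegral_const_mul _ Measurable.of_discrete]
    refine lintegral_mono fun b => ?_
    dsimp only
    rw [← Finset.sum_add_distrib, Finset.mul_sum]
    refine Finset.sum_le_sum fun α _ => ?_
    rw [← Finset.sum_add_distrib, Finset.mul_sum]
    refine Finset.sum_le_sum fun β _ => ?_
    rw [← add_mul]
    exact mul_le_mul_left (E_sym l α β) _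
  exact (ENNReal.mul_le_mul_iff_right (by norm_num) (by norm_num)).mp h2

theorem Q_le (l : ℝ) (n : ℕ) : ∀ G : Set (Set X),
    Q μ l n G ≤ E (l ^ 2 / 2) ^ n * (rr (2 * n) G : ENNReal) := by
  induction n with
  | zero =>
    intro G
    unfold Q
    by_cases hG : G.Nonempty
    · simp [rr, hG, phi, hits, E]
    · have hE : G = ∅ := Set.not_nonempty_iff_eq_empty.mp hG
      simp [hE]
  | succ n ih =>
    intro G
    refine (Q_step μ l n G).trans ((Q_sym μ l _ G).trans ?_)
    rw [pow_succ' (E (l ^ 2 / 2)) n, mul_assoc]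
    refine mul_le_mul_right ?_ _
    have : ∀ a b, ∑ α : Bool, ∑ β : Bool, Q μ l n (cut (cut G a α) b β) ≤
        E (l ^ 2 / 2) ^ n * (rr (2 * (n + 1)) G : ENNReal) := by
      intro a b
      calc _ ≤ ∑ α : Bool, ∑ β : Bool,
            E (l ^ 2 / 2) ^ n * (rr (2 * n) (cut (cut G a α) b β) : ENNReal) :=
            Finset.sum_le_sum fun α _ => Finset.sum_le_sum fun β _ => ih _
        _ = E (l ^ 2 / 2) ^ n * ((∑ α : Bool, ∑ β : Bool, rr (2 * n) (cut (cut G a α) b β) : ℕ) :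
            ENNReal) := by
            push_cast
            simp_rw [Finset.mul_sum]
        _ ≤ _ := by
            gcongr
            have h1 := rr_step (2 * n) (cut G a true) b
            have h2 := rr_step (2 * n) (cut G a false) b
            have h3 := rr_step (2 * n + 1) G a
            simp only [Fintype.sum_bool]
            have e : 2 * (n + 1) = 2 * n + 1 + 1 := by ring
            rw [e]; omega
    calc _ ≤ ∫⁻ a, ∫⁻ b, E (l ^ 2 / 2) ^ n * (rr (2 * (n + 1)) G : ENNReal) ∂μ ∂μ :=
          lintegral_mono fun a => lintegral_mono fun b => this a b
      _ = _ := by simp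

theorem tail (l : ℝ) (n : ℕ) (F : Set (Set X)) (ε : ℝ)  :
    tm μ n {x | ∃ S ∈ F, n * (|l| * ε) ≤ l * (hits S x - n * (μ S).toReal)} ≤
      E (-(n * (|l| * ε))) * (E (l ^ 2 / 2) ^ n * ((rr n F * rr n F : ℕ) : ENNReal)) := by
  have h1 : E (n * (|l| * ε)) *
      tm μ n {x | ∃ S ∈ F, n * (|l| * ε) ≤ l * (hits S x - n * (μ S).toReal)} ≤ Q μ l n F := by
    refine le_trans ?_ (mul_meas_ge_le_lintegral (μ := tm μ n) Measurable.of_discrete (E (n * (|l| * ε))))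
    gcongr
    rintro ⟨S, hS, h⟩
    refine le_trans ?_ (le_iSup₂ (f := fun S (_ : S ∈ F) => phi μ l n S _) S hS)
    exact ENNReal.ofReal_le_ofReal (Real.exp_le_exp.mpr h)
  have h2 := h1.trans (Q_le μ l n F)
  have h3 : E (-(n * (|l| * ε))) * E (n * (|l| * ε)) = 1 := by
    rw [← E_add]; simp [E]
  have h4 : rr (2 * n) F ≤ rr n F * rr n F := by
    rw [two_mul]; exact rr_add F n n F subset_rfl
  calc _ = E (-(n * (|l| * ε))) * (E (n * (|l| * ε)) *
      tm μ n {x | ∃ S ∈ F, n * (|l| * ε) ≤ l * (hits S x - n * (μ S).toReal)}) := by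
        rw [← mul_assoc (E _) (E _), h3, one_mul]
    _ ≤ E (-(n * (|l| * ε))) * (E (l ^ 2 / 2) ^ n * (rr (2 * n) F : ENNReal)) := by gcongr
    _ ≤ _ := by gcongr

end meas

end ThicketVC

open ThicketVC in
theorem vc_theorem_for_thickets {X : Type*} [Fintype X] [MeasurableSpace X]
    [MeasurableSingletonClass X] (μ : Measure X) [IsProbabilityMeasure μ]
    (F : Set (Set X)) (n : ℕ) (hn : 1 ≤ n) (ε : ℝ) (hε : 0 < ε) :
    (Measure.pi (fun _ : Σ i : Fin n, (Fin i.1 → Bool) => μ))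
        {x | ∃ S ∈ F, ε < |ttest S x - (μ S).toReal|} ≤
      ENNReal.ofReal (8 * (thicketShatter F n : ℝ) * Real.exp (-(n * ε ^ 2) / 32)) := by
  have : Nonempty X := nonempty_of_isProbabilityMeasure μ
  set r : ℝ := (thicketShatter F n : ℝ) with hr
  set u : ℝ := Real.exp (-(n * ε ^ 2) / 32) with hu
  by_cases htriv : 1 ≤ 8 * r * u
  · refine prob_le_one.trans ?_
    rw [← ENNReal.ofReal_one]
    exact ENNReal.ofReal_le_ofReal htriv
  push Not at htriv
  have hn0 : (0 : ℝ) < n := by exact_mod_cast hn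
  have hsub : {x : Node n → X | ∃ S ∈ F, ε < |ttest S x - (μ S).toReal|} ⊆
      {x | ∃ S ∈ F, n * (|ε| * ε) ≤ ε * (hits S x - n * (μ S).toReal)} ∪
      {x | ∃ S ∈ F, n * (|-ε| * ε) ≤ -ε * (hits S x - n * (μ S).toReal)} := by
    rintro x ⟨S, hS, h⟩
    have e : ttest S x - (μ S).toReal = (hits S x - n * (μ S).toReal) / n := by
      rw [ttest_eq]; field_simp
    rw [e] at h
    rcases lt_abs.mp h with h | h
    · left
      refine ⟨S, hS, ?_⟩
      rw [lt_div_iff₀ hn0] at h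
      rw [abs_of_pos hε]
      nlinarith
    · right
      refine ⟨S, hS, ?_⟩
      rw [← neg_div, lt_div_iff₀ hn0] at h
      rw [abs_neg, abs_of_pos hε]
      nlinarith
  refine (measure_mono hsub).trans ((measure_union_le _ _).trans ?_)
  refine (add_le_add (tail μ ε n F ε) (tail μ (-ε) n F ε)).trans ?_
  rw [abs_neg, neg_sq, abs_of_pos hε]
  have hEn : ∀ (t : ℝ) (k : ℕ), E t ^ k = E (k * t) := by
    intro t k
    unfold E
    rw [Real.exp_nat_mul, ENNReal.ofReal_pow (Real.exp_pos _).le]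
  rw [hEn, ← mul_assoc, ← E_add, ← two_mul]
  have hu16 : Real.exp (-(n * (ε * ε)) + n * (ε ^ 2 / 2)) = u ^ 16 := by
    rw [hu, ← Real.exp_nat_mul]; congr 1; push_cast; ring
  unfold E
  rw [hu16]
  have hup : 0 < u := Real.exp_pos _
  have hu1 : u ≤ 1 := Real.exp_le_one_iff.mpr (by
    have : 0 ≤ (n : ℝ) * ε ^ 2 := by positivity
    linarith)
  have hr0 : 0 ≤ r := Nat.cast_nonneg _
  have hrr : ((rr n F * rr n F : ℕ) : ENNReal) ≤ ENNReal.ofReal (r * r) := by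
    rw [hr, ← Nat.cast_mul, ENNReal.ofReal_natCast]
    exact_mod_cast Nat.mul_le_mul (rr_le_shatter n F) (rr_le_shatter n F)
  calc _ ≤ ENNReal.ofReal 2 * (ENNReal.ofReal (u ^ 16) * ENNReal.ofReal (r * r)) := by
        gcongr; simp
    _ = ENNReal.ofReal (2 * (u ^ 16 * (r * r))) := by
        rw [← ENNReal.ofReal_mul (by positivity), ← ENNReal.ofReal_mul (by positivity)]
    _ ≤ _ := by
        apply ENNReal.ofReal_le_ofReal
        have h15 : u ^ 14 ≤ 1 := pow_le_one₀ hup.le hu1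
        have hru : 0 ≤ r * u := by positivity
        have h1 : (r * u) * (r * u) ≤ r * u := by nlinarith
        calc 2 * (u ^ 16 * (r * r)) = 2 * (u ^ 14 * ((r * u) * (r * u))) := by ring
          _ ≤ 2 * (1 * (r * u)) := by gcongr
          _ ≤ _ := by nlinarith
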